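/- If there exists an NDoT-optimal schedule (for the given B and C), then every MDT-optimal schedule is NDoT-optimal. -/

import Mathlib

open scoped Classical

/-- A listening schedule over channel set `C`: a set of (channel, time-slot) pairs
such that all scanned channels belong to `C` and at most one channel is scanned
per time slot. -/
def IsSchedule (C : Finset ℕ) (L : Set (ℕ × ℕ)) : Prop :=
  (∀ p ∈ L, p.1 ∈ C) ∧ ∀ c c' t : ℕ, (c, t) ∈ L → (c', t) ∈ L → c = c'

/-- Configuration `(c, b, δ)` is discovered at time slot `t` by the schedule `L`. -/
def DiscoveredAt (L : Set (ℕ × ℕ)) (c b δ t : ℕ) : Prop :=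
  (c, t) ∈ L ∧ t % b = δ

/-- The discovery time `T_κ(L)` of configuration `κ = (c, b, δ)`: the least time slot
at which it is discovered (junk value `0` if it is never discovered). -/
noncomputable def discTime (L : Set (ℕ × ℕ)) (c b δ : ℕ) : ℕ :=
  sInf {t | DiscoveredAt L c b δ t}

/-- A schedule is complete if every configuration in `K_BC` is discovered at some slot. -/
def Complete (C B : Finset ℕ) (L : Set (ℕ × ℕ)) : Prop :=
  ∀ c ∈ C, ∀ b ∈ B, ∀ δ < b, ∃ t, DiscoveredAt L c b δ t

/-- The set of all configurations `K_BC`, as a finite set of triples `(c, b, δ)`. -/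
def KBC (C B : Finset ℕ) : Finset (ℕ × ℕ × ℕ) :=
  (C ×ˢ B ×ˢ Finset.range (B.sup id)).filter fun κ => κ.2.2 < κ.2.1

/-- The weight `P_κ = 1/(b·|B|·|C|)` of a configuration with beacon period `b`. -/
noncomputable def weight (C B : Finset ℕ) (b : ℕ) : ℝ :=
  (1 : ℝ) / ((b : ℝ) * (B.card : ℝ) * (C.card : ℝ))

/-- Total weight of configurations discovered by `L` at some slot `≤ t` (the NDoT curve). -/
noncomputable def discSum (C B : Finset ℕ) (L : Set (ℕ × ℕ)) (t : ℕ) : ℝ :=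
  ∑ κ ∈ (KBC C B).filter (fun κ => ∃ t' ≤ t, DiscoveredAt L κ.1 κ.2.1 κ.2.2 t'),
    weight C B κ.2.1

/-- The mean discovery time `MDT(L) = Σ_{κ ∈ K_BC} P_κ · T_κ(L)`. -/
noncomputable def MDT (C B : Finset ℕ) (L : Set (ℕ × ℕ)) : ℝ :=
  ∑ κ ∈ KBC C B, weight C B κ.2.1 * (discTime L κ.1 κ.2.1 κ.2.2 : ℝ)

/-- A schedule is recursive if it is complete and, for every `b ∈ B`, every
configuration with beacon period `b` has discovery time at most `b·|C| - 1`. -/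
def Recursive (C B : Finset ℕ) (L : Set (ℕ × ℕ)) : Prop :=
  Complete C B L ∧
  ∀ c ∈ C, ∀ b ∈ B, ∀ δ < b, discTime L c b δ ≤ b * C.card - 1

/-- `D(c,t)`: the expected number of new discoveries when scanning channel `c` at slot `t`,
i.e. the sum of weights of configurations `(c, b, t mod b)`, `b ∈ B`, not yet
discovered by `L` before slot `t`. -/
noncomputable def gain (C B : Finset ℕ) (L : Set (ℕ × ℕ)) (c t : ℕ) : ℝ :=
  ∑ b ∈ B.filter (fun b => ¬ ∃ t' < t, DiscoveredAt L c b (t % b) t'),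
    weight C B b

/-- A schedule is greedy if, whenever some channel has positive expected gain at slot `t`,
it scans a channel maximizing the expected gain at slot `t`. -/
def Greedy (C B : Finset ℕ) (L : Set (ℕ × ℕ)) : Prop :=
  IsSchedule C L ∧
  ∀ t : ℕ, (∃ c ∈ C, 0 < gain C B L c t) →
    ∃ c ∈ C, (c, t) ∈ L ∧ ∀ c' ∈ C, gain C B L c' t ≤ gain C B L c t

/-!
Summing the discovery curve `t ↦ discSum C B L t` of a complete schedule over a long enough initial
segment of time slots counts each configuration once for every slot from its discovery onwards, so
the sum equals a constant minus `MDT C B L`. A schedule `S` whose curve dominates that of a complete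
schedule `L` is complete as well; if moreover `MDT C B L ≤ MDT C B S`, the sums of the two curves
force them to coincide.
-/

/-- The truncated subtraction is intended: an `i` with `N ≤ T i` never enters the left-hand side. -/
theorem sum_range_sum_filter_le {ι M : Type*} [AddCommMonoid M] (s : Finset ι) (w : ι → M)
    (T : ι → ℕ) (N : ℕ) :
    ∑ t ∈ Finset.range N, ∑ i ∈ s with T i ≤ t, w i = ∑ i ∈ s, (N - T i) • w i := by
  simp only [Finset.sum_filter]
  rw [Finset.sum_comm]
  refine Finset.sum_congr rfl fun i _ => ?_
  have slots_eq_Ico : {t ∈ Finset.range N | T i ≤ t} = Finset.Ico (T i) N := by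
    ext t
    simp only [Finset.mem_filter, Finset.mem_range, Finset.mem_Ico, and_comm]
  rw [← Finset.sum_filter, slots_eq_Ico, Finset.sum_const, Nat.card_Ico]

section Schedules

variable {C B : Finset ℕ} {L S : Set (ℕ × ℕ)}

theorem mem_KBC {κ : ℕ × ℕ × ℕ} :
    κ ∈ KBC C B ↔ κ.1 ∈ C ∧ κ.2.1 ∈ B ∧ κ.2.2 < κ.2.1 := by
  simp only [KBC, Finset.mem_filter, Finset.mem_product, Finset.mem_range, and_assoc]
  refine and_congr_right fun _ => and_congr_right fun hb => and_iff_right_of_imp fun hδ => ?_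
  exact hδ.trans_le (Finset.le_sup (f := id) hb)

theorem complete_iff_forall_mem_KBC :
    Complete C B L ↔ ∀ κ ∈ KBC C B, ∃ t, DiscoveredAt L κ.1 κ.2.1 κ.2.2 t := by
  simp only [Complete, mem_KBC, Prod.forall]
  grind

theorem weight_pos_of_mem_KBC {κ : ℕ × ℕ × ℕ} (hκ : κ ∈ KBC C B) : 0 < weight C B κ.2.1 := by
  obtain ⟨hc, hb, hδ⟩ := mem_KBC.mp hκ
  have period_pos : 0 < κ.2.1 := Nat.zero_lt_of_lt hδ
  have card_B_pos : 0 < B.card := Finset.card_pos.mpr ⟨_, hb⟩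
  have card_C_pos : 0 < C.card := Finset.card_pos.mpr ⟨_, hc⟩
  unfold weight
  positivity

theorem exists_le_discoveredAt_iff_discTime_le {c b δ : ℕ} (h : ∃ t, DiscoveredAt L c b δ t)
    (t : ℕ) : (∃ t' ≤ t, DiscoveredAt L c b δ t') ↔ discTime L c b δ ≤ t :=
  ⟨fun ⟨_, hle, hdisc⟩ => (Nat.sInf_le hdisc).trans hle, fun hle => ⟨_, hle, Nat.sInf_mem h⟩⟩

theorem discSum_eq_sum_weight_iff {t : ℕ} :
    discSum C B L t = ∑ κ ∈ KBC C B, weight C B κ.2.1 ↔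
      ∀ κ ∈ KBC C B, ∃ t' ≤ t, DiscoveredAt L κ.1 κ.2.1 κ.2.2 t' := by
  rw [discSum, Finset.sum_filter, Finset.sum_eq_sum_iff_of_le]
  · exact forall₂_congr fun κ hκ => by simp [(weight_pos_of_mem_KBC hκ).ne]
  · intro κ hκ
    split_ifs
    exacts [le_rfl, (weight_pos_of_mem_KBC hκ).le]

theorem discSum_le_sum_weight (t : ℕ) :
    discSum C B L t ≤ ∑ κ ∈ KBC C B, weight C B κ.2.1 :=
  Finset.sum_le_sum_of_subset_of_nonneg (Finset.filter_subset _ _)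
    fun _ hκ _ => (weight_pos_of_mem_KBC hκ).le

/-- The worst-case discovery time: the latest first discovery among all configurations. Since
`discTime` is `0` for undiscovered configurations, it is meaningful only for complete schedules. -/
noncomputable def worstDiscTime (C B : Finset ℕ) (L : Set (ℕ × ℕ)) : ℕ :=
  (KBC C B).sup fun κ => discTime L κ.1 κ.2.1 κ.2.2

theorem discTime_le_worstDiscTime {κ : ℕ × ℕ × ℕ} (hκ : κ ∈ KBC C B) :
    discTime L κ.1 κ.2.1 κ.2.2 ≤ worstDiscTime C B L :=
  Finset.le_sup (f := fun κ : ℕ × ℕ × ℕ => discTime L κ.1 κ.2.1 κ.2.2) hκ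

namespace Complete

theorem discSum_worstDiscTime (hL : Complete C B L) :
    discSum C B L (worstDiscTime C B L) = ∑ κ ∈ KBC C B, weight C B κ.2.1 :=
  discSum_eq_sum_weight_iff.mpr fun κ hκ =>
    (exists_le_discoveredAt_iff_discTime_le (complete_iff_forall_mem_KBC.mp hL κ hκ) _).mpr
      (discTime_le_worstDiscTime hκ)

theorem of_discSum_le (hL : Complete C B L) (hle : ∀ t, discSum C B L t ≤ discSum C B S t) :
    Complete C B S := by
  have discSum_eq : discSum C B S (worstDiscTime C B L) = ∑ κ ∈ KBC C B, weight C B κ.2.1 :=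
    (discSum_le_sum_weight _).antisymm (hL.discSum_worstDiscTime ▸ hle _)
  refine complete_iff_forall_mem_KBC.mpr fun κ hκ => ?_
  obtain ⟨t, -, hdisc⟩ := discSum_eq_sum_weight_iff.mp discSum_eq κ hκ
  exact ⟨t, hdisc⟩

theorem discSum_eq_sum_filter_discTime_le (hL : Complete C B L) (t : ℕ) :
    discSum C B L t =
      ∑ κ ∈ KBC C B with discTime L κ.1 κ.2.1 κ.2.2 ≤ t, weight C B κ.2.1 := by
  rw [discSum]
  congr 1
  exact Finset.filter_congr fun κ hκ =>
    exists_le_discoveredAt_iff_discTime_le (complete_iff_forall_mem_KBC.mp hL κ hκ) t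

theorem sum_range_discSum (hL : Complete C B L) {N : ℕ} (hN : worstDiscTime C B L ≤ N) :
    ∑ t ∈ Finset.range N, discSum C B L t =
      N * ∑ κ ∈ KBC C B, weight C B κ.2.1 - MDT C B L := by
  simp only [hL.discSum_eq_sum_filter_discTime_le, sum_range_sum_filter_le]
  rw [MDT, Finset.mul_sum, ← Finset.sum_sub_distrib]
  refine Finset.sum_congr rfl fun κ hκ => ?_
  rw [nsmul_eq_mul, Nat.cast_sub ((discTime_le_worstDiscTime hκ).trans hN)]
  ring

theorem discSum_eq_of_le_of_MDT_le (hL : Complete C B L)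
    (hle : ∀ t, discSum C B L t ≤ discSum C B S t) (hMDT : MDT C B L ≤ MDT C B S) (t : ℕ) :
    discSum C B L t = discSum C B S t := by
  have hS : Complete C B S := hL.of_discSum_le hle
  obtain ⟨N, hLN, hSN, htN⟩ : ∃ N, worstDiscTime C B L ≤ N ∧ worstDiscTime C B S ≤ N ∧ t < N :=
    ⟨worstDiscTime C B L + worstDiscTime C B S + t + 1, by omega, by omega, by omega⟩
  have sum_eq : ∑ s ∈ Finset.range N, discSum C B L s = ∑ s ∈ Finset.range N, discSum C B S s := by
    refine (Finset.sum_le_sum fun s _ => hle s).antisymm ?_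
    rw [hL.sum_range_discSum hLN, hS.sum_range_discSum hSN]
    exact sub_le_sub_left hMDT _
  exact (Finset.sum_eq_sum_iff_of_le fun s _ => hle s).mp sum_eq t (Finset.mem_range.mpr htN)

end Complete

end Schedules

/-- if an NDoT-optimal schedule exists, then every MDT-optimal schedule
is NDoT-optimal. -/
theorem stmt19 (C B : Finset ℕ) (hC : C.Nonempty) (hB : B.Nonempty)
    (hBpos : ∀ b ∈ B, 0 < b)
    (hex : ∃ Lstar : Set (ℕ × ℕ), IsSchedule C Lstar ∧
      ∀ L' : Set (ℕ × ℕ), IsSchedule C L' →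
        ∀ t : ℕ, discSum C B L' t ≤ discSum C B Lstar t)
    (L : Set (ℕ × ℕ)) (hL : IsSchedule C L) (hcomp : Complete C B L)
    (hmdt : ∀ L' : Set (ℕ × ℕ), IsSchedule C L' → Complete C B L' →
      MDT C B L ≤ MDT C B L') :
    ∀ L' : Set (ℕ × ℕ), IsSchedule C L' →
      ∀ t : ℕ, discSum C B L' t ≤ discSum C B L t := by
  obtain ⟨S, hS, S_optimal⟩ := hex
  have S_complete : Complete C B S := hcomp.of_discSum_le (S_optimal L hL)
  intro L' hL' t
  rw [hcomp.discSum_eq_of_le_of_MDT_le (S_optimal L hL) (hmdt S hS S_complete) t]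
  exact S_optimal L' hL' t
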